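/- Let φ ∈ Δ be a unit spinor. The trilinear forms ψ_φ and ψ_φ⁻ are alternating, and for all x, y, z ∈ ℝ^6 they satisfy ψ_φ⁻(x,y,z) = ψ_φ(J_φ x, J_φ y, J_φ z) = −ψ_φ(J_φ x, y, z). -/

import Mathlib

open RealInnerProductSpace

noncomputable section

/-- The spin representation space Δ = ℝ^8. -/
abbrev Δ : Type := EuclideanSpace ℝ (Fin 8)

/-- The standard skew endomorphism E_{ij} of ℝ^8: u_i ↦ u_j, u_j ↦ -u_i, others ↦ 0. -/
def E (i j : Fin 8) : Δ →ₗ[ℝ] Δ where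
  toFun v := v i • EuclideanSpace.single j (1 : ℝ) - v j • EuclideanSpace.single i (1 : ℝ)
  map_add' x y := by
    simp only [PiLp.add_apply, add_smul]
    module
  map_smul' c x := by
    simp only [PiLp.smul_apply, smul_eq_mul, RingHom.id_apply, mul_smul]
    module

/-- The seven Clifford endomorphisms e_1, …, e_7 (indexed 0,…,6). -/
def cliff : Fin 7 → (Δ →ₗ[ℝ] Δ) :=
  ![  E 0 7 + E 1 6 - E 2 5 - E 3 4,
    - E 0 6 + E 1 7 + E 2 4 - E 3 5,
    - E 0 5 + E 1 4 - E 2 7 + E 3 6,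
    - E 0 4 - E 1 5 - E 2 6 - E 3 7,
    - E 0 2 - E 1 3 + E 4 6 + E 5 7,
      E 0 3 - E 1 2 - E 4 7 + E 5 6,
      E 0 1 - E 2 3 - E 4 5 + E 6 7]

/-- j = e_1 ∘ e_2 ∘ e_3 ∘ e_4 ∘ e_5 ∘ e_6. -/
def jmap : Δ →ₗ[ℝ] Δ :=
  cliff 0 ∘ₗ cliff 1 ∘ₗ cliff 2 ∘ₗ cliff 3 ∘ₗ cliff 4 ∘ₗ cliff 5

/-- Clifford multiplication of a vector x ∈ ℝ^6 on a spinor. -/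
def cm6 (x : EuclideanSpace ℝ (Fin 6)) (φ : Δ) : Δ :=
  ∑ i : Fin 6, x i • cliff i.castSucc φ

/-- Clifford multiplication of a vector x ∈ ℝ^7 on a spinor. -/
def cm7 (x : EuclideanSpace ℝ (Fin 7)) (φ : Δ) : Δ :=
  ∑ i : Fin 7, x i • cliff i φ


/-- Standard basis vector of ℝ^6. -/
def v6 (i : Fin 6) : EuclideanSpace ℝ (Fin 6) := EuclideanSpace.single i (1 : ℝ)

/-- The 3-form ψ_φ(x,y,z) = -⟨x·y·z·φ, φ⟩ on ℝ^6. -/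
def psiP (φ : Δ) (x y z : EuclideanSpace ℝ (Fin 6)) : ℝ :=
  -⟪cm6 x (cm6 y (cm6 z φ)), φ⟫

/-- The 3-form ψ_φ⁻(x,y,z) = -⟨x·y·z·φ, j(φ)⟩ on ℝ^6. -/
def psiM (φ : Δ) (x y z : EuclideanSpace ℝ (Fin 6)) : ℝ :=
  -⟪cm6 x (cm6 y (cm6 z φ)), jmap φ⟫

/-- Action of a trilinear form on ℝ^6 on a spinor:
τ·χ := Σ_{i<j<k} τ(v_i,v_j,v_k) e_i(e_j(e_k(χ))). -/
def tact6 (τ : EuclideanSpace ℝ (Fin 6) → EuclideanSpace ℝ (Fin 6) →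
    EuclideanSpace ℝ (Fin 6) → ℝ) (χ : Δ) : Δ :=
  ∑ i : Fin 6, ∑ j : Fin 6, ∑ k : Fin 6,
    if i < j ∧ j < k then
      τ (v6 i) (v6 j) (v6 k) • cliff i.castSucc (cliff j.castSucc (cliff k.castSucc χ))
    else 0

/-- Action of a bilinear form on ℝ^6 on a spinor:
σ·χ := Σ_{i<j} σ(v_i,v_j) e_i(e_j(χ)). -/
def bact6 (σ : EuclideanSpace ℝ (Fin 6) → EuclideanSpace ℝ (Fin 6) → ℝ) (χ : Δ) : Δ :=
  ∑ i : Fin 6, ∑ j : Fin 6,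
    if i < j then σ (v6 i) (v6 j) • cliff i.castSucc (cliff j.castSucc χ) else 0

/-! Clifford multiplication by `x` is skew-adjoint, and so is `j`, which anticommutes with it; hence
`x · φ` is orthogonal to both `φ` and `j φ`. For `η` orthogonal to all `x · φ`, the Clifford
relation makes `⟨x · y · z · φ, η⟩` change sign under transpositions of adjacent arguments.

Moving `x` to the right-hand side of the inner product turns `j (x · φ) = (J x) · φ` into
`ψ⁻(x, y, z) = -ψ(J x, y, z)`. As `ψ⁻` is alternating too, `J` can be moved from one argument of `ψ`
to another, so `ψ(J x, J y, J z) = ψ(J J x, y, J z) = -ψ(x, y, J z) = -ψ(J x, y, z)`.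

The properties of `j` are those of the volume element of any Clifford multiplication on a space of
dimension `n ≡ 2 mod 4`: evenness of `n` gives anticommutation and oddness of `n (n + 1) / 2` gives
`j² = -1`. -/

section AnticommutingProducts

variable {A : Type*} [Ring A]

theorem mul_list_prod_of_forall_anticommute {x : A} {l : List A}
    (hx : ∀ y ∈ l, x * y = -(y * x)) :
    x * l.prod = (-1 : ℤ) ^ l.length • (l.prod * x) := by
  induction l with
  | nil => simp
  | cons y l ih =>
    have hxl := ih fun z hz => hx z (List.mem_cons_of_mem y hz)
    rw [List.prod_cons, ← mul_assoc, hx y List.mem_cons_self, neg_mul, mul_assoc y x, hxl,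
      List.length_cons, pow_succ, mul_neg_one, neg_smul, mul_smul_comm, mul_assoc]

theorem mul_list_prod_of_mem_of_pairwise_anticommute {x : A} {l : List A}
    (hl : l.Pairwise fun y z => y * z = -(z * y)) (hx : x ∈ l) :
    x * l.prod = -((-1 : ℤ) ^ l.length • (l.prod * x)) := by
  induction l with
  | nil => simp at hx
  | cons y l ih =>
    obtain ⟨hy, hl⟩ := List.pairwise_cons.mp hl
    rw [List.prod_cons, List.length_cons, pow_succ, mul_neg_one, neg_smul, neg_neg]
    rcases List.mem_cons.mp hx with rfl | hxl
    · rw [mul_assoc x, ← mul_smul_comm, ← mul_list_prod_of_forall_anticommute hy]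
    · have hxy : x * y = -(y * x) := by rw [hy x hxl, neg_neg]
      rw [← mul_assoc, hxy, neg_mul, mul_assoc y x, ih hl hxl, mul_neg, neg_neg, mul_smul_comm,
        mul_assoc]

theorem list_prod_mul_self_of_pairwise_anticommute {l : List A}
    (hl : l.Pairwise fun y z => y * z = -(z * y)) (hsq : ∀ y ∈ l, y * y = -1) :
    l.prod * l.prod = (-1 : ℤ) ^ (l.length + 1).choose 2 • (1 : A) := by
  induction l with
  | nil => simp
  | cons y l ih =>
    obtain ⟨hy, hl⟩ := List.pairwise_cons.mp hl
    have hprod := ih hl fun z hz => hsq z (List.mem_cons_of_mem y hz)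
    have hmove : l.prod * y = (-1 : ℤ) ^ l.length • (y * l.prod) := by
      rw [mul_list_prod_of_forall_anticommute hy, smul_smul, ← mul_pow]
      simp
    calc (y :: l).prod * (y :: l).prod
        = y * (l.prod * y) * l.prod := by simp only [List.prod_cons, mul_assoc]
      _ = (-1 : ℤ) ^ l.length • ((y * y) * (l.prod * l.prod)) := by
        rw [hmove, mul_smul_comm, smul_mul_assoc]; simp only [mul_assoc]
      _ = (-1 : ℤ) ^ ((y :: l).length + 1).choose 2 • (1 : A) := by
        rw [hsq y List.mem_cons_self, hprod, List.length_cons, Nat.choose_succ_succ' (l.length + 1),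
          Nat.choose_one_right, pow_add, pow_succ, mul_neg_one, neg_one_mul, neg_mul, neg_smul,
          smul_neg, smul_smul]

end AnticommutingProducts

section CliffordMultiplication

variable {V S : Type*} [NormedAddCommGroup V] [InnerProductSpace ℝ V]
  [NormedAddCommGroup S] [InnerProductSpace ℝ S]

/-- `c` is an orthogonal Clifford multiplication of vectors in `V` on spinors in `S`, with the sign
convention `x · x · a = -‖x‖² a`. The Clifford relation is stated in polarized form. -/
structure IsCliffordMul (c : V →ₗ[ℝ] Module.End ℝ S) : Prop where
  inner_apply_left (x : V) (a b : S) : ⟪c x a, b⟫ = -⟪a, c x b⟫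
  mul_add_swap (x y : V) : c x * c y + c y * c x = -((2 * ⟪x, y⟫) • (1 : Module.End ℝ S))

/-- `j` is an orthogonal complex structure on the spinors that anticommutes with the Clifford
multiplication `c`. -/
structure IsSpinorComplexStructure (c : V →ₗ[ℝ] Module.End ℝ S) (j : Module.End ℝ S) : Prop where
  inner_apply_left (a b : S) : ⟪j a, b⟫ = -⟪a, j b⟫
  apply_apply (a : S) : j (j a) = -a
  anticommute (x : V) (a : S) : j (c x a) = -c x (j a)

namespace IsCliffordMul

variable {c : V →ₗ[ℝ] Module.End ℝ S}

theorem apply_apply_swap (hc : IsCliffordMul c) (x y : V) (a : S) :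
    c x (c y a) = -c y (c x a) - (2 * ⟪x, y⟫) • a := by
  have h := LinearMap.congr_fun (hc.mul_add_swap x y) a
  simp only [LinearMap.add_apply, Module.End.mul_apply, LinearMap.neg_apply,
    LinearMap.smul_apply, Module.End.one_apply] at h
  rw [eq_sub_iff_add_eq, ← sub_eq_zero, ← sub_eq_zero.mpr h]
  abel

theorem mul_self_of_norm_eq_one (hc : IsCliffordMul c) {x : V} (hx : ‖x‖ = 1) :
    c x * c x = -1 := by
  have h := hc.mul_add_swap x x
  rw [real_inner_self_eq_norm_sq, hx, ← two_smul ℝ, one_pow, mul_one, ← smul_neg] at h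
  exact smul_right_injective _ (two_ne_zero' ℝ) h

theorem mul_eq_neg_mul_of_inner_eq_zero (hc : IsCliffordMul c) {x y : V} (hxy : ⟪x, y⟫ = 0) :
    c x * c y = -(c y * c x) := by
  have h := hc.mul_add_swap x y
  rw [hxy, mul_zero, zero_smul, neg_zero] at h
  exact eq_neg_of_add_eq_zero_left h

theorem inner_apply_apply_of_norm_eq_one (hc : IsCliffordMul c) {x : V} (hx : ‖x‖ = 1) (a b : S) :
    ⟪c x a, c x b⟫ = ⟪a, b⟫ := by
  rw [hc.inner_apply_left, ← Module.End.mul_apply, hc.mul_self_of_norm_eq_one hx,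
    LinearMap.neg_apply, Module.End.one_apply, inner_neg_right, neg_neg]

theorem inner_apply_self (hc : IsCliffordMul c) (x : V) (a : S) : ⟪c x a, a⟫ = 0 := by
  have h := hc.inner_apply_left x a a
  rwa [real_inner_comm, self_eq_neg, real_inner_comm] at h

end IsCliffordMul

section VolumeElement

variable {n : ℕ}

/-- The volume element of a Clifford multiplication: the ordered product of the actions of an
orthonormal basis. -/
def volumeElement (c : V →ₗ[ℝ] Module.End ℝ S) (b : OrthonormalBasis (Fin n) ℝ V) :
    Module.End ℝ S :=
  (List.ofFn fun i => c (b i)).prod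

variable {c : V →ₗ[ℝ] Module.End ℝ S}

theorem IsCliffordMul.pairwise_anticommute_ofFn (hc : IsCliffordMul c)
    (b : OrthonormalBasis (Fin n) ℝ V) :
    (List.ofFn fun i => c (b i)).Pairwise fun f g => f * g = -(g * f) :=
  List.pairwise_ofFn.mpr fun _ _ hij =>
    hc.mul_eq_neg_mul_of_inner_eq_zero (b.inner_eq_zero hij.ne)

theorem IsCliffordMul.volumeElement_mul_self (hc : IsCliffordMul c)
    (b : OrthonormalBasis (Fin n) ℝ V) :
    volumeElement c b * volumeElement c b =
      (-1 : ℤ) ^ (n + 1).choose 2 • (1 : Module.End ℝ S) := by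
  have hsq : ∀ f ∈ List.ofFn fun i => c (b i), f * f = -1 :=
    List.forall_mem_ofFn_iff.mpr fun i => hc.mul_self_of_norm_eq_one (b.norm_eq_one i)
  simpa only [volumeElement, List.length_ofFn] using
    list_prod_mul_self_of_pairwise_anticommute (hc.pairwise_anticommute_ofFn b) hsq

theorem IsCliffordMul.mul_volumeElement (hc : IsCliffordMul c)
    (b : OrthonormalBasis (Fin n) ℝ V) (x : V) :
    c x * volumeElement c b = -((-1 : ℤ) ^ n • (volumeElement c b * c x)) := by
  have hbasis (i : Fin n) :
      c (b i) * volumeElement c b = -((-1 : ℤ) ^ n • (volumeElement c b * c (b i))) := by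
    simpa only [volumeElement, List.length_ofFn] using mul_list_prod_of_mem_of_pairwise_anticommute
      (hc.pairwise_anticommute_ofFn b) (List.mem_ofFn.mpr ⟨i, rfl⟩)
  rw [← b.sum_repr x]
  simp only [map_sum, map_smul, Finset.sum_mul, Finset.mul_sum, Finset.smul_sum, smul_mul_assoc,
    mul_smul_comm, hbasis, smul_neg, Finset.sum_neg_distrib, smul_comm ((-1 : ℤ) ^ n)]

theorem IsCliffordMul.inner_volumeElement_volumeElement (hc : IsCliffordMul c)
    (b : OrthonormalBasis (Fin n) ℝ V) (s t : S) :
    ⟪volumeElement c b s, volumeElement c b t⟫ = ⟪s, t⟫ := by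
  refine List.prod_induction (fun f : Module.End ℝ S => ∀ s t, ⟪f s, f t⟫ = ⟪s, t⟫)
    (fun f g hf hg s t => ?_) (fun _ _ => rfl) ?_ s t
  · rw [Module.End.mul_apply, Module.End.mul_apply, hf, hg]
  · exact List.forall_mem_ofFn_iff.mpr fun i =>
      hc.inner_apply_apply_of_norm_eq_one (b.norm_eq_one i)

theorem odd_choose_succ_two_of_mod_four_eq_two (hn : n % 4 = 2) : Odd ((n + 1).choose 2) := by
  obtain ⟨k, rfl⟩ : ∃ k, n = 4 * k + 2 := ⟨n / 4, by omega⟩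
  refine ⟨4 * k ^ 2 + 5 * k + 1, ?_⟩
  rw [Nat.choose_two_right]
  exact Nat.div_eq_of_eq_mul_left two_pos (by rw [Nat.add_sub_cancel]; ring)

theorem IsCliffordMul.isSpinorComplexStructure_volumeElement (hc : IsCliffordMul c)
    (b : OrthonormalBasis (Fin n) ℝ V) (hn : n % 4 = 2) :
    IsSpinorComplexStructure c (volumeElement c b) := by
  have hsq (a : S) : volumeElement c b (volumeElement c b a) = -a := by
    rw [← Module.End.mul_apply, hc.volumeElement_mul_self,
      (odd_choose_succ_two_of_mod_four_eq_two hn).neg_one_pow, neg_one_smul]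
    rfl
  have heven : Even n := Nat.even_iff.mpr (by omega)
  refine ⟨fun s t => ?_, hsq, fun x a => ?_⟩
  · rw [← hc.inner_volumeElement_volumeElement b s, hsq, inner_neg_right, neg_neg]
  · have h := LinearMap.congr_fun (hc.mul_volumeElement b x) a
    rw [heven.neg_one_pow, one_smul] at h
    exact (neg_eq_iff_eq_neg.mpr h).symm

end VolumeElement

section CliffordMulOfFamily

variable {ι : Type*} [Fintype ι]

/-- The Clifford multiplication of `ℝ^ι` whose standard basis acts by the endomorphisms `e i`. -/
def cliffordMulOfFamily (e : ι → Module.End ℝ S) :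
    EuclideanSpace ℝ ι →ₗ[ℝ] Module.End ℝ S :=
  Fintype.linearCombination ℝ e ∘ₗ (WithLp.linearEquiv 2 ℝ (ι → ℝ)).toLinearMap

theorem cliffordMulOfFamily_apply (e : ι → Module.End ℝ S) (x : EuclideanSpace ℝ ι) :
    cliffordMulOfFamily e x = ∑ i, x i • e i :=
  rfl

theorem cliffordMulOfFamily_single [DecidableEq ι] (e : ι → Module.End ℝ S) (i : ι) :
    cliffordMulOfFamily e (EuclideanSpace.single i 1) = e i := by
  simp [cliffordMulOfFamily_apply]

theorem isCliffordMul_cliffordMulOfFamily [DecidableEq ι] {e : ι → Module.End ℝ S}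
    (hskew : ∀ i a b, ⟪e i a, b⟫ = -⟪a, e i b⟫)
    (hmul : ∀ i k, e i * e k + e k * e i = if i = k then -2 else 0) :
    IsCliffordMul (cliffordMulOfFamily e) where
  inner_apply_left x a b := by
    simp only [cliffordMulOfFamily_apply, LinearMap.sum_apply, LinearMap.smul_apply, sum_inner,
      inner_sum, real_inner_smul_left, real_inner_smul_right, hskew, mul_neg,
      Finset.sum_neg_distrib]
  mul_add_swap x y := by
    calc cliffordMulOfFamily e x * cliffordMulOfFamily e y +
          cliffordMulOfFamily e y * cliffordMulOfFamily e x
        = ∑ i, ∑ k, (x i * y k) • (e i * e k + e k * e i) := by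
          simp only [cliffordMulOfFamily_apply, Finset.sum_mul_sum, smul_mul_smul_comm, smul_add,
            Finset.sum_add_distrib]
          rw [Finset.sum_comm (f := fun i k => (y i * x k) • (e i * e k))]
          simp only [mul_comm]
      _ = -((2 * ⟪x, y⟫) • (1 : Module.End ℝ S)) := by
          simp only [hmul, smul_ite, smul_zero, Finset.sum_ite_eq, Finset.mem_univ, if_true,
            PiLp.inner_apply, Finset.mul_sum, Finset.sum_smul, ← Finset.sum_neg_distrib]
          refine Finset.sum_congr rfl fun i _ => ?_
          have htwo : (2 : Module.End ℝ S) = (2 : ℝ) • 1 := by rw [two_smul, one_add_one_eq_two]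
          rw [htwo, ← smul_neg, ← smul_neg, smul_smul, real_inner_comm, mul_comm 2]
          rfl

end CliffordMulOfFamily

section SpinorForm

variable {c : V →ₗ[ℝ] Module.End ℝ S} {j : Module.End ℝ S}

/-- The trilinear form `(x, y, z) ↦ -⟨x · y · z · φ, η⟩` of a pair of spinors: `ψ_φ` is the case
`η = φ`, and `ψ_φ⁻` the case `η = j φ`. -/
def spinorForm (c : V →ₗ[ℝ] Module.End ℝ S) (φ η : S) (x y z : V) : ℝ :=
  -⟪c x (c y (c z φ)), η⟫

theorem spinorForm_swap_left (hc : IsCliffordMul c) {φ η : S} (hη : ∀ v, ⟪c v φ, η⟫ = 0)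
    (x y z : V) : spinorForm c φ η x y z = -spinorForm c φ η y x z := by
  rw [spinorForm, hc.apply_apply_swap x y, inner_sub_left, inner_neg_left, real_inner_smul_left,
    hη, mul_zero, sub_zero, spinorForm]

theorem spinorForm_swap_right (hc : IsCliffordMul c) {φ η : S} (hη : ∀ v, ⟪c v φ, η⟫ = 0)
    (x y z : V) : spinorForm c φ η x y z = -spinorForm c φ η x z y := by
  rw [spinorForm, hc.apply_apply_swap y z, map_sub, map_neg, map_smul, inner_sub_left,
    inner_neg_left, real_inner_smul_left, hη, mul_zero, sub_zero, spinorForm]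

theorem spinorForm_alternating (hc : IsCliffordMul c) {φ η : S} (hη : ∀ v, ⟪c v φ, η⟫ = 0)
    (x y z : V) :
    spinorForm c φ η x x z = 0 ∧ spinorForm c φ η x y y = 0 ∧ spinorForm c φ η x y x = 0 := by
  have hleft (u w : V) : spinorForm c φ η u u w = 0 :=
    self_eq_neg.mp (spinorForm_swap_left hc hη u u w)
  refine ⟨hleft x z, self_eq_neg.mp (spinorForm_swap_right hc hη x y y), ?_⟩
  rw [spinorForm_swap_right hc hη, hleft, neg_zero]

theorem IsSpinorComplexStructure.inner_apply_apply_eq_zero (hj : IsSpinorComplexStructure c j)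
    (hc : IsCliffordMul c) (x : V) (φ : S) : ⟪c x φ, j φ⟫ = 0 := by
  have h : ⟪c x φ, j φ⟫ = -⟪c x φ, j φ⟫ := calc
    ⟪c x φ, j φ⟫ = -⟪φ, c x (j φ)⟫ := hc.inner_apply_left x φ (j φ)
    _ = ⟪φ, j (c x φ)⟫ := by rw [hj.anticommute, inner_neg_right]
    _ = -⟪c x φ, j φ⟫ := by rw [← hj.inner_apply_left, real_inner_comm]
  exact self_eq_neg.mp h

section InducedComplexStructure

variable {φ : S} {J : V → V}

theorem spinorForm_complexStructure_eq_neg (hc : IsCliffordMul c)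
    (hj : IsSpinorComplexStructure c j) (hJ : ∀ x, j (c x φ) = c (J x) φ) (x y z : V) :
    spinorForm c φ (j φ) x y z = -spinorForm c φ φ (J x) y z := by
  rw [spinorForm, spinorForm, hc.inner_apply_left, hc.inner_apply_left (J x), ← hJ, hj.anticommute,
    inner_neg_right, neg_neg, neg_neg]

theorem spinorForm_map_map_left (hc : IsCliffordMul c) (hj : IsSpinorComplexStructure c j)
    (hJ : ∀ x, j (c x φ) = c (J x) φ) (x y z : V) :
    spinorForm c φ φ (J (J x)) y z = -spinorForm c φ φ x y z := by
  rw [spinorForm, spinorForm, hc.inner_apply_left, hc.inner_apply_left x, ← hJ, ← hJ,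
    hj.apply_apply, inner_neg_right]

theorem spinorForm_map_middle (hc : IsCliffordMul c) (hj : IsSpinorComplexStructure c j)
    (hJ : ∀ x, j (c x φ) = c (J x) φ) (x y z : V) :
    spinorForm c φ φ x (J y) z = spinorForm c φ φ (J x) y z := calc
  spinorForm c φ φ x (J y) z = -spinorForm c φ φ (J y) x z :=
    spinorForm_swap_left hc (hc.inner_apply_self · φ) x (J y) z
  _ = spinorForm c φ (j φ) y x z := (spinorForm_complexStructure_eq_neg hc hj hJ y x z).symm
  _ = -spinorForm c φ (j φ) x y z :=
    spinorForm_swap_left hc (hj.inner_apply_apply_eq_zero hc · φ) y x z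
  _ = spinorForm c φ φ (J x) y z := by rw [spinorForm_complexStructure_eq_neg hc hj hJ, neg_neg]

theorem spinorForm_map_right (hc : IsCliffordMul c) (hj : IsSpinorComplexStructure c j)
    (hJ : ∀ x, j (c x φ) = c (J x) φ) (x y z : V) :
    spinorForm c φ φ x y (J z) = spinorForm c φ φ (J x) y z := by
  rw [spinorForm_swap_right hc (hc.inner_apply_self · φ), spinorForm_map_middle hc hj hJ,
    ← spinorForm_swap_right hc (hc.inner_apply_self · φ)]

theorem spinorForm_map_map_map (hc : IsCliffordMul c) (hj : IsSpinorComplexStructure c j)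
    (hJ : ∀ x, j (c x φ) = c (J x) φ) (x y z : V) :
    spinorForm c φ φ (J x) (J y) (J z) = -spinorForm c φ φ (J x) y z := by
  rw [spinorForm_map_middle hc hj hJ, spinorForm_map_map_left hc hj hJ,
    spinorForm_map_right hc hj hJ]

end InducedComplexStructure

end SpinorForm

theorem psi_alternating_and_psiMinus_general {c : V →ₗ[ℝ] Module.End ℝ S} {j : Module.End ℝ S}
    (hc : IsCliffordMul c) (hj : IsSpinorComplexStructure c j) (φ : S) (J : V → V)
    (hJ : ∀ x, j (c x φ) = c (J x) φ) :
    (∀ x y z, spinorForm c φ φ x x z = 0 ∧ spinorForm c φ φ x y y = 0 ∧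
      spinorForm c φ φ x y x = 0) ∧
    (∀ x y z, spinorForm c φ (j φ) x x z = 0 ∧ spinorForm c φ (j φ) x y y = 0 ∧
      spinorForm c φ (j φ) x y x = 0) ∧
    (∀ x y z, spinorForm c φ (j φ) x y z = spinorForm c φ φ (J x) (J y) (J z) ∧
      spinorForm c φ (j φ) x y z = -spinorForm c φ φ (J x) y z) := by
  refine ⟨spinorForm_alternating hc (hc.inner_apply_self · φ),
    spinorForm_alternating hc (hj.inner_apply_apply_eq_zero hc · φ), fun x y z => ⟨?_, ?_⟩⟩
  · rw [spinorForm_map_map_map hc hj hJ, spinorForm_complexStructure_eq_neg hc hj hJ]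
  · exact spinorForm_complexStructure_eq_neg hc hj hJ x y z

end CliffordMultiplication

section SpinRepresentation

theorem inner_E_left (i k : Fin 8) (a b : Δ) : ⟪E i k a, b⟫ = -⟪a, E i k b⟫ := by
  simp only [E, LinearMap.coe_mk, AddHom.coe_mk, inner_sub_left, inner_sub_right,
    real_inner_smul_left, real_inner_smul_right, EuclideanSpace.inner_single_left,
    EuclideanSpace.inner_single_right, map_one, one_mul, conj_trivial]
  ring

theorem inner_cliff_left (i : Fin 7) (a b : Δ) : ⟪cliff i a, b⟫ = -⟪a, cliff i b⟫ := by
  fin_cases i <;>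
    simp [cliff, inner_add_left, inner_sub_left, inner_add_right, inner_sub_right, inner_E_left] <;>
    ring

/-- The bit mask by which `cliff i` permutes, up to sign, the standard basis of `ℝ^8`: it takes
coordinate `k ^^^ cliffMask i` to coordinate `k`. -/
def cliffMask : Fin 7 → Fin 8 :=
  ![7, 6, 5, 4, 2, 3, 1]

/-- The matrix entries `±1` of the signed permutation `cliff i`: `cliffSign i k` is the one in row
`k` and column `k ^^^ cliffMask i`. They are integers so that identities between them are
decidable. -/
def cliffSign : Fin 7 → Fin 8 → ℤ :=
  ![![-1, -1,  1,  1, -1, -1,  1,  1],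
    ![ 1, -1, -1,  1,  1, -1, -1,  1],
    ![ 1, -1,  1, -1,  1, -1,  1, -1],
    ![ 1,  1,  1,  1, -1, -1, -1, -1],
    ![ 1,  1, -1, -1, -1, -1,  1,  1],
    ![-1,  1, -1,  1,  1, -1,  1, -1],
    ![-1,  1,  1, -1,  1, -1, -1,  1]]

theorem E_apply (i k : Fin 8) (a : Δ) (l : Fin 8) :
    E i k a l = (if l = k then a i else 0) - (if l = i then a k else 0) := by
  simp [E]

theorem cliff_apply (i : Fin 7) (a : Δ) (k : Fin 8) :
    cliff i a k = cliffSign i k * a (k ^^^ cliffMask i) := by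
  fin_cases i <;> fin_cases k <;> simp [cliff, E_apply, cliffSign, cliffMask]

theorem xor_cliffMask_comm (i k : Fin 7) (l : Fin 8) :
    l ^^^ cliffMask k ^^^ cliffMask i = l ^^^ cliffMask i ^^^ cliffMask k := by
  decide +revert

theorem xor_cliffMask_cancel (i : Fin 7) (l : Fin 8) : l ^^^ cliffMask i ^^^ cliffMask i = l := by
  decide +revert

theorem cliffSign_mul_add_swap (i k : Fin 7) (l : Fin 8) :
    cliffSign i l * cliffSign k (l ^^^ cliffMask i) +
      cliffSign k l * cliffSign i (l ^^^ cliffMask k) = if i = k then -2 else 0 := by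
  decide +revert

theorem cliff_mul_add_swap (i k : Fin 7) :
    cliff i * cliff k + cliff k * cliff i = if i = k then -2 else 0 := by
  ext a l
  calc (cliff i * cliff k + cliff k * cliff i) a l
      = ((cliffSign i l * cliffSign k (l ^^^ cliffMask i) +
          cliffSign k l * cliffSign i (l ^^^ cliffMask k) : ℤ) : ℝ) *
          a (l ^^^ cliffMask i ^^^ cliffMask k) := by
        simp only [LinearMap.add_apply, Module.End.mul_apply, PiLp.add_apply, cliff_apply,
          xor_cliffMask_comm i k]
        push_cast
        ring
    _ = (if i = k then -2 else 0 : Module.End ℝ Δ) a l := by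
        rw [cliffSign_mul_add_swap]
        split_ifs with hik
        · simp [hik, xor_cliffMask_cancel, Module.End.ofNat_apply]
        · simp

/-- Clifford multiplication `cm6`, bundled as a linear map into the endomorphisms of `Δ`. -/
def spinMul : EuclideanSpace ℝ (Fin 6) →ₗ[ℝ] Module.End ℝ Δ :=
  cliffordMulOfFamily fun i : Fin 6 => cliff i.castSucc

theorem cm6_eq_spinMul (x : EuclideanSpace ℝ (Fin 6)) (a : Δ) : cm6 x a = spinMul x a := by
  simp only [cm6, spinMul, cliffordMulOfFamily_apply, LinearMap.sum_apply, LinearMap.smul_apply]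

theorem jmap_eq_volumeElement :
    jmap = volumeElement spinMul (EuclideanSpace.basisFun (Fin 6) ℝ) := by
  simp only [volumeElement, spinMul, EuclideanSpace.basisFun_apply, cliffordMulOfFamily_single,
    List.ofFn_succ, List.ofFn_zero, List.prod_cons, List.prod_nil, mul_one]
  rfl

theorem isCliffordMul_spinMul : IsCliffordMul spinMul :=
  isCliffordMul_cliffordMulOfFamily (fun i => inner_cliff_left i.castSucc) fun i k => by
    simpa only [Fin.castSucc_inj] using cliff_mul_add_swap i.castSucc k.castSucc

theorem isSpinorComplexStructure_jmap : IsSpinorComplexStructure spinMul jmap :=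
  jmap_eq_volumeElement ▸
    isCliffordMul_spinMul.isSpinorComplexStructure_volumeElement _ rfl

theorem psiP_eq_spinorForm (φ : Δ) (x y z : EuclideanSpace ℝ (Fin 6)) :
    psiP φ x y z = spinorForm spinMul φ φ x y z := by
  simp only [psiP, spinorForm, cm6_eq_spinMul]

theorem psiM_eq_spinorForm (φ : Δ) (x y z : EuclideanSpace ℝ (Fin 6)) :
    psiM φ x y z = spinorForm spinMul φ (jmap φ) x y z := by
  simp only [psiM, spinorForm, cm6_eq_spinMul]

end SpinRepresentation

/-- The trilinear forms ψ_φ and ψ_φ⁻ are alternating, and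
ψ_φ⁻(x,y,z) = ψ_φ(J_φ x, J_φ y, J_φ z) = -ψ_φ(J_φ x, y, z).
Here J_φ is the unique linear map with j(x·φ) = (J_φ x)·φ. -/
theorem psi_alternating_and_psiMinus (φ : Δ) (hφ : ⟪φ, φ⟫ = 1)
    (J : EuclideanSpace ℝ (Fin 6) →ₗ[ℝ] EuclideanSpace ℝ (Fin 6))
    (hJ : ∀ x : EuclideanSpace ℝ (Fin 6), jmap (cm6 x φ) = cm6 (J x) φ) :
    (∀ x y z : EuclideanSpace ℝ (Fin 6),
      psiP φ x x z = 0 ∧ psiP φ x y y = 0 ∧ psiP φ x y x = 0) ∧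
    (∀ x y z : EuclideanSpace ℝ (Fin 6),
      psiM φ x x z = 0 ∧ psiM φ x y y = 0 ∧ psiM φ x y x = 0) ∧
    (∀ x y z : EuclideanSpace ℝ (Fin 6),
      psiM φ x y z = psiP φ (J x) (J y) (J z) ∧
      psiM φ x y z = -psiP φ (J x) y z) := by
  simpa only [psiP_eq_spinorForm, psiM_eq_spinorForm] using
    psi_alternating_and_psiMinus_general isCliffordMul_spinMul isSpinorComplexStructure_jmap φ J
      fun x => by rw [← cm6_eq_spinMul, ← cm6_eq_spinMul, hJ]

end
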